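/- For every base b ≥ 2, x ∈ [0,1), and A ⊆ [0,1): dim_FS^b(x) = dim_FS(seq_b(x)) and dim_FS^b(A) = dim_FS(seq_b(A)), where seq_b(A) = {seq_b(α) : α ∈ A} and dim_FS of a set of sequences is inf_T sup_{S} liminf_n K^T(S↾n)/n. -/

import Mathlib

open Filter Set
open scoped ENNReal

/-- A finite-state transducer over alphabet `A`, with states `Fin n`. -/
structure FST (A : Type) where
  n : ℕ
  tr : Fin n → A → Fin n
  out1 : Fin n → A → List A
  q0 : Fin n

/-- Extension of the transition function to strings. -/
def FST.deltaS {A : Type} (T : FST A) : Fin T.n → List A → Fin T.n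
  | q, [] => q
  | q, a :: w => T.deltaS (T.tr q a) w

/-- Extension of the output function to strings. -/
def FST.nuS {A : Type} (T : FST A) : Fin T.n → List A → List A
  | _, [] => []
  | q, a :: w => T.out1 q a ++ T.nuS (T.tr q a) w

/-- The output of `T` on input `w`. -/
def FST.out {A : Type} (T : FST A) (w : List A) : List A := T.nuS T.q0 w

/-- `T`-information content of a string: shortest input producing it (`⊤` if none). -/
noncomputable def Kfst {A : Type} (T : FST A) (w : List A) : ℕ∞ :=
  sInf {k : ℕ∞ | ∃ π : List A, T.out π = w ∧ (π.length : ℕ∞) = k}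

/-- The real number in `[0,1)` with finite base-`b` expansion `w`. -/
noncomputable def realb (b : ℕ) (w : List (Fin b)) : ℝ :=
  ∑ i : Fin w.length, (w.get i : ℝ) / (b : ℝ) ^ (i.1 + 1)

/-- The real number with base-`b` expansion `S`. -/
noncomputable def realSeq (b : ℕ) (S : ℕ → Fin b) : ℝ :=
  ∑' i : ℕ, (S i : ℝ) / (b : ℝ) ^ (i + 1)

/-- The length-`n` prefix of a sequence, as a string. -/
def pre {A : Type} (S : ℕ → A) (n : ℕ) : List A := List.ofFn (fun i : Fin n => S i.1)

/-- Base-`b` `T`-information content of `x` at precision `δ`. -/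
noncomputable def Kprec (b : ℕ) (T : FST (Fin b)) (δ : ℝ) (x : ℝ) : ℕ∞ :=
  sInf {k : ℕ∞ | ∃ w : List (Fin b), |realb b w - x| < δ ∧ Kfst T w = k}

/-- Base-`b` finite-state dimension of a point of `[0,1)`. -/
noncomputable def dimFSb (b : ℕ) (x : ℝ) : ℝ≥0∞ :=
  ⨅ T : FST (Fin b),
    Filter.liminf (fun δ : ℝ =>
      (Kprec b T δ x : ℝ≥0∞) / ENNReal.ofReal (Real.logb b (1/δ)))
      (nhdsWithin 0 (Set.Ioi 0))

/-- Base-`b` finite-state dimension of a subset of `[0,1)`. -/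
noncomputable def dimFSbSet (b : ℕ) (A : Set ℝ) : ℝ≥0∞ :=
  ⨅ T : FST (Fin b), ⨆ x ∈ A,
    Filter.liminf (fun δ : ℝ =>
      (Kprec b T δ x : ℝ≥0∞) / ENNReal.ofReal (Real.logb b (1/δ)))
      (nhdsWithin 0 (Set.Ioi 0))

/-- Finite-state dimension of a sequence (Doty–Moser characterization). -/
noncomputable def dimFSseq {A : Type} (S : ℕ → A) : ℝ≥0∞ :=
  ⨅ T : FST A,
    Filter.liminf (fun n : ℕ => (Kfst T (pre S n) : ℝ≥0∞) / (n : ℝ≥0∞)) Filter.atTop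

/-- Finite-state dimension of a set of sequences. -/
noncomputable def dimFSseqSet {A : Type} (X : Set (ℕ → A)) : ℝ≥0∞ :=
  ⨅ T : FST A, ⨆ S ∈ X,
    Filter.liminf (fun n : ℕ => (Kfst T (pre S n) : ℝ≥0∞) / (n : ℝ≥0∞)) Filter.atTop

/-- digit complement of a sequence -/
def compSeq (b : ℕ) (S : ℕ → Fin b) : ℕ → Fin b :=
  fun i => ⟨b - 1 - (S i : ℕ), by have := (S i).isLt; omega⟩

/-- `S` ends with infinitely many digits `b-1`. -/
def endsBm1 (b : ℕ) (S : ℕ → Fin b) : Prop := ∃ N, ∀ i ≥ N, (S i : ℕ) = b - 1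

/-- A separator enumerator: a map into `[0,1)` with dense image in `[0,1]`. -/
def isSE {A : Type} (f : List A → ℝ) : Prop :=
  (∀ w, f w ∈ Set.Ico (0:ℝ) 1) ∧ ∀ y ∈ Set.Icc (0:ℝ) 1, y ∈ closure (Set.range f)

/-- `f`-`T`-information content of `x` at precision `δ`. -/
noncomputable def KprecF {A : Type} (T : FST A) (f : List A → ℝ) (δ : ℝ) (x : ℝ) : ℕ∞ :=
  sInf {k : ℕ∞ | ∃ w : List A, |f w - x| < δ ∧ Kfst T w = k}

/-- `f`-enumerator finite-state dimension of a point. -/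
noncomputable def dimFSf {A : Type} [Fintype A] (f : List A → ℝ) (x : ℝ) : ℝ≥0∞ :=
  ⨅ T : FST A,
    Filter.liminf (fun δ : ℝ =>
      (KprecF T f δ x : ℝ≥0∞) / ENNReal.ofReal (Real.logb (Fintype.card A) (1/δ)))
      (nhdsWithin 0 (Set.Ioi 0))

/-- `f`-enumerator finite-state dimension of a set. -/
noncomputable def dimFSfSet {A : Type} [Fintype A] (f : List A → ℝ) (E : Set ℝ) : ℝ≥0∞ :=
  ⨅ T : FST A, ⨆ x ∈ E,
    Filter.liminf (fun δ : ℝ =>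
      (KprecF T f δ x : ℝ≥0∞) / ENNReal.ofReal (Real.logb (Fintype.card A) (1/δ)))
      (nhdsWithin 0 (Set.Ioi 0))

open scoped Classical in
/-- Number of occurrences of `w` among the first `N` positions of `S`. -/
noncomputable def occCount {b : ℕ} (S : ℕ → Fin b) (w : List (Fin b)) (N : ℕ) : ℕ :=
  (Finset.range N).filter (fun i => ∀ j : Fin w.length, S (i + j.1) = w.get j) |>.card

/-!
A truncated expansion of `x` to `n` digits lies within `b⁻ⁿ` of `x`, so approximating `x` is never
harder than producing its prefixes. Conversely, a word within `b⁻ⁿ` of `x` need not be a prefix of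
the expansion of `x`, because of carries such as `0.1000…` against `0.0999…`; but the prefix of
length `n` always consists of a prefix of the word followed by at most three runs of equal digits.
Given a transducer `T` and `m > 0`, let `T'` simulate `T` on blocks of `m` input symbols, each
preceded by a flag, and switch to decoding run lengths as soon as a different flag appears. Then
`T'` produces any prefix of an output of `T` followed by such runs, at a cost which exceeds that of
`T` by a factor `1 + 1/m` and by `O(n/m)`. The error terms vanish as `m → ∞`.
-/

/-- A transducer over `A` with an arbitrary type `σ` of states and no designated initial state. -/
structure Transducer (σ A : Type*) where
  step : σ → A → σ
  emit : σ → A → List A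

namespace Transducer

variable {σ A : Type*}

/-- The string emitted on an input read from a given state, together with the state reached. -/
def run (M : Transducer σ A) : σ → List A → List A × σ
  | q, [] => ([], q)
  | q, a :: w => (M.emit q a ++ (M.run (M.step q a) w).1, (M.run (M.step q a) w).2)

theorem run_cons_of_eq {M : Transducer σ A} {q q' q'' : σ} {a : A} {w v : List A}
    (ha : M.step q a = q') (hw : M.run q' w = (v, q'')) :
    M.run q (a :: w) = (M.emit q a ++ v, q'') := by
  simp [run, ha, hw]

theorem run_append (M : Transducer σ A) (q : σ) (x y : List A) :
    M.run q (x ++ y) =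
      ((M.run q x).1 ++ (M.run (M.run q x).2 y).1, (M.run (M.run q x).2 y).2) := by
  induction x generalizing q with
  | nil => rfl
  | cons a x ih => simp [run, ih]

theorem run_append_of_eq {M : Transducer σ A} {q q' q'' : σ} {x y u v : List A}
    (hx : M.run q x = (u, q')) (hy : M.run q' y = (v, q'')) :
    M.run q (x ++ y) = (u ++ v, q'') := by
  simp [run_append, hx, hy]

theorem exists_length_emit_le [Finite σ] [Finite A] (M : Transducer σ A) :
    ∃ C : ℕ, ∀ q a, (M.emit q a).length ≤ C := by
  obtain ⟨C, hC⟩ := (Set.finite_range fun p : σ × A => (M.emit p.1 p.2).length).bddAbove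
  exact ⟨C, fun q a => hC ⟨(q, a), rfl⟩⟩

theorem length_run_le {M : Transducer σ A} {C : ℕ} (hC : ∀ q a, (M.emit q a).length ≤ C)
    (q : σ) (w : List A) : (M.run q w).1.length ≤ C * w.length := by
  induction w generalizing q with
  | nil => simp [run]
  | cons a w ih =>
    have := hC q a
    have := ih (M.step q a)
    simp only [run, List.length_append, List.length_cons, Nat.mul_succ]
    omega

theorem exists_prefix_run_append_of_prefix {M : Transducer σ A} {C : ℕ}
    (hC : ∀ q a, (M.emit q a).length ≤ C) {q : σ} {w u : List A} (hu : u <+: (M.run q w).1) :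
    ∃ x v : List A, x <+: w ∧ u = (M.run q x).1 ++ v ∧ v.length ≤ C := by
  induction w generalizing q u with
  | nil => exact ⟨[], [], List.nil_prefix, by simpa [run] using hu, Nat.zero_le C⟩
  | cons a w ih =>
    rcases le_total u.length C with hle | hge
    · exact ⟨[], u, List.nil_prefix, rfl, hle⟩
    · obtain ⟨u', rfl⟩ : M.emit q a <+: u :=
        List.prefix_of_prefix_length_le (List.prefix_append _ _) hu ((hC q a).trans hge)
      obtain ⟨x, v, hx, rfl, hv⟩ := ih ((List.prefix_append_right_inj _).1 hu)
      exact ⟨a :: x, v, (List.prefix_cons_inj a).2 hx, by simp [run], hv⟩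

theorem exists_dvd_run_append_of_prefix {M : Transducer σ A} {C m : ℕ}
    (hC : ∀ q a, (M.emit q a).length ≤ C) (hm : 0 < m) {q : σ} {w u : List A}
    (hu : u <+: (M.run q w).1) :
    ∃ x v : List A, m ∣ x.length ∧ x.length ≤ w.length ∧ u = (M.run q x).1 ++ v ∧
      v.length ≤ C * m := by
  obtain ⟨y, v, hy, rfl, hv⟩ := exists_prefix_run_append_of_prefix hC hu
  set k := m * (y.length / m)
  have hmod : k + y.length % m = y.length := Nat.div_add_mod y.length m
  have hlt : y.length % m < m := Nat.mod_lt _ hm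
  refine ⟨y.take k, (M.run (M.run q (y.take k)).2 (y.drop k)).1 ++ v, ?_, ?_, ?_, ?_⟩
  · rw [List.length_take_of_le (by omega)]
    exact dvd_mul_right m _
  · exact (List.length_take_le' k y).trans hy.length_le
  · rw [← List.append_assoc]
    congr 1
    conv_lhs => rw [← List.take_append_drop k y, run_append]
  · calc
      _ ≤ C * (y.drop k).length + C := by
        rw [List.length_append]
        exact Nat.add_le_add (length_run_le hC _ _) hv
      _ = C * (y.length % m + 1) := by rw [List.length_drop, Nat.sub_eq_of_eq_add' hmod.symm]; rfl
      _ ≤ C * m := Nat.mul_le_mul_left C hlt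

end Transducer

/-- The transition structure of a finite-state transducer, without its initial state. -/
def FST.toTransducer {A : Type} (T : FST A) : Transducer (Fin T.n) A := ⟨T.tr, T.out1⟩

theorem FST.out_eq_run {A : Type} (T : FST A) (w : List A) :
    T.out w = (T.toTransducer.run T.q0 w).1 := by
  suffices ∀ q, T.nuS q w = (T.toTransducer.run q w).1 from this T.q0
  induction w with
  | nil => exact fun _ => rfl
  | cons a w ih => exact fun q => congrArg (T.out1 q a ++ ·) (ih (T.tr q a))

theorem Transducer.exists_fst_out_eq_run {σ : Type*} {A : Type} [Finite σ] (M : Transducer σ A)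
    (q₀ : σ) : ∃ T : FST A, ∀ w, T.out w = (M.run q₀ w).1 := by
  obtain ⟨n, ⟨e⟩⟩ := Finite.exists_equiv_fin σ
  let T : FST A :=
    ⟨n, fun q a => e (M.step (e.symm q) a), fun q a => M.emit (e.symm q) a, e q₀⟩
  suffices ∀ w q, T.nuS (e q) w = (M.run q w).1 from ⟨T, fun w => this w q₀⟩
  intro w
  induction w with
  | nil => exact fun _ => rfl
  | cons a w ih => intro q; simp [FST.nuS, run, T, ← ih]

/-- The concatenation of runs `a ^ k`, one for each pair `(a, k)` of the list. -/
def ofRuns {A : Type*} (rs : List (A × ℕ)) : List A :=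
  rs.flatMap fun r => List.replicate r.2 r.1

namespace Transducer

variable {σ τ A : Type*} [DecidableEq A]

/-- The run-length decoder: it reads pairs `f a` of symbols and emits `a` once if the flag `f` is
`z`, and `m` times otherwise. The state holds the flag, if it has just been read. -/
def runDecoder (m : ℕ) (z : A) : Transducer (Option A) A where
  step
    | none, f => some f
    | some _, _ => none
  emit
    | none, _ => []
    | some f, a => List.replicate (if f = z then 1 else m) a

theorem runDecoder_run_pair (m : ℕ) (z f a : A) :
    (runDecoder m z).run none [f, a] = (List.replicate (if f = z then 1 else m) a, none) := by
  simp [run, runDecoder]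

theorem exists_runDecoder_run_eq (m : ℕ) (z : A) (v : List A) :
    ∃ π : List A, π.length = 2 * v.length ∧ (runDecoder m z).run none π = (v, none) := by
  induction v with
  | nil => exact ⟨[], rfl, rfl⟩
  | cons a v ih =>
    obtain ⟨π, hlen, hrun⟩ := ih
    refine ⟨[z, a] ++ π, by grind, ?_⟩
    simpa using run_append_of_eq (runDecoder_run_pair m z z a) hrun

theorem exists_runDecoder_run_replicate_mul (m : ℕ) {z o : A} (ho : o ≠ z) (a : A) (j : ℕ) :
    ∃ π : List A, π.length = 2 * j ∧
      (runDecoder m z).run none π = (List.replicate (m * j) a, none) := by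
  induction j with
  | zero => exact ⟨[], rfl, rfl⟩
  | succ j ih =>
    obtain ⟨π, hlen, hrun⟩ := ih
    refine ⟨π ++ [o, a], by grind, ?_⟩
    simpa [ho, List.replicate_append_replicate, Nat.mul_succ] using
      run_append_of_eq hrun (runDecoder_run_pair m z o a)

theorem exists_runDecoder_run_replicate {m : ℕ} (hm : 0 < m) {z o : A} (ho : o ≠ z) (a : A)
    (k : ℕ) : ∃ π : List A, m * π.length ≤ 2 * k + 2 * m * m ∧
      (runDecoder m z).run none π = (List.replicate k a, none) := by
  obtain ⟨π₁, hlen₁, hrun₁⟩ := exists_runDecoder_run_replicate_mul m ho a (k / m)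
  obtain ⟨π₂, hlen₂, hrun₂⟩ := exists_runDecoder_run_eq m z (List.replicate (k % m) a)
  have hdiv : m * (k / m) + k % m = k := Nat.div_add_mod k m
  refine ⟨π₁ ++ π₂, ?_, ?_⟩
  · have hmod : k % m < m := Nat.mod_lt k hm
    simp only [List.length_append, List.length_replicate, hlen₁, hlen₂]
    nlinarith
  · simpa [List.replicate_append_replicate, hdiv] using run_append_of_eq hrun₁ hrun₂

theorem exists_runDecoder_run_ofRuns {m : ℕ} (hm : 0 < m) {z o : A} (ho : o ≠ z)
    (rs : List (A × ℕ)) :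
    ∃ π : List A, m * π.length ≤ 2 * (ofRuns rs).length + 2 * m * m * rs.length ∧
      (runDecoder m z).run none π = (ofRuns rs, none) := by
  induction rs with
  | nil => exact ⟨[], by simp, rfl⟩
  | cons r rs ih =>
    obtain ⟨π₁, hlen₁, hrun₁⟩ := exists_runDecoder_run_replicate hm ho r.1 r.2
    obtain ⟨π₂, hlen₂, hrun₂⟩ := ih
    refine ⟨π₁ ++ π₂, ?_, run_append_of_eq hrun₁ hrun₂⟩
    simp only [ofRuns, List.flatMap_cons, List.length_append, List.length_replicate,
      List.length_cons] at hlen₂ ⊢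
    linarith

/-- Simulates `M` on blocks of `m` symbols, each announced by the flag `z`; any other flag hands
the rest of the input over to `U`, started in `t`. The second component of a simulating state
counts the symbols left in the current block, so that a flag is due when it is `0`. -/
def blockSwitch (M : Transducer σ A) (U : Transducer τ A) (t : τ) (m : ℕ) (z : A) :
    Transducer ((σ × Fin (m + 1)) ⊕ τ) A where
  step
    | .inl (q, ⟨0, _⟩), f => if f = z then .inl (q, Fin.last m) else .inr t
    | .inl (q, ⟨i + 1, hi⟩), a => .inl (M.step q a, ⟨i, Nat.lt_of_succ_lt hi⟩)
    | .inr s, a => .inr (U.step s a)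
  emit
    | .inl (_, ⟨0, _⟩), _ => []
    | .inl (q, ⟨_ + 1, _⟩), a => M.emit q a
    | .inr s, a => U.emit s a

section blockSwitch

variable (M : Transducer σ A) (U : Transducer τ A) (t : τ) (m : ℕ) (z : A)

theorem blockSwitch_run_inr (s : τ) (w : List A) :
    (M.blockSwitch U t m z).run (.inr s) w = ((U.run s w).1, .inr (U.run s w).2) := by
  induction w generalizing s with
  | nil => rfl
  | cons a w ih => exact run_cons_of_eq rfl (ih (U.step s a))

theorem blockSwitch_run_cons_of_ne (q : σ) {o : A} (ho : o ≠ z) (w : List A) :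
    (M.blockSwitch U t m z).run (.inl (q, 0)) (o :: w) =
      ((U.run t w).1, .inr (U.run t w).2) :=
  run_cons_of_eq (if_neg ho) (blockSwitch_run_inr M U t m z t w)

theorem blockSwitch_run_of_length_eq (q : σ) (β : List A) (i : Fin (m + 1))
    (hβ : β.length = i) :
    (M.blockSwitch U t m z).run (.inl (q, i)) β = ((M.run q β).1, .inl ((M.run q β).2, 0)) := by
  induction β generalizing q i with
  | nil =>
    obtain rfl : i = 0 := Fin.ext hβ.symm
    rfl
  | cons a β ih =>
    obtain ⟨_ | i, hi⟩ := i
    · simp at hβ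
    · exact run_cons_of_eq rfl (ih (M.step q a) ⟨i, Nat.lt_of_succ_lt hi⟩ (by simpa using hβ))

theorem blockSwitch_run_block (q : σ) {β : List A} (hβ : β.length = m) :
    (M.blockSwitch U t m z).run (.inl (q, 0)) (z :: β) =
      ((M.run q β).1, .inl ((M.run q β).2, 0)) :=
  run_cons_of_eq (if_pos rfl) (blockSwitch_run_of_length_eq M U t m z q β (Fin.last m) hβ)

theorem exists_blockSwitch_run_eq (j : ℕ) (q : σ) {w : List A} (hw : w.length = m * j) :
    ∃ π : List A, π.length = (m + 1) * j ∧ (M.blockSwitch U t m z).run (.inl (q, 0)) π =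
      ((M.run q w).1, .inl ((M.run q w).2, 0)) := by
  induction j generalizing q w with
  | zero =>
    obtain rfl : w = [] := List.length_eq_zero_iff.1 hw
    exact ⟨[], rfl, rfl⟩
  | succ j ih =>
    have hβ : (w.take m).length = m := List.length_take_of_le (by rw [hw]; nlinarith)
    obtain ⟨π, hlen, hrun⟩ := ih (M.run q (w.take m)).2 (w := w.drop m) (by simp [hw, mul_add])
    refine ⟨z :: w.take m ++ π, by grind, ?_⟩
    rw [run_append_of_eq (blockSwitch_run_block M U t m z q hβ) hrun]
    conv_rhs => rw [← List.take_append_drop m w, run_append]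

end blockSwitch

end Transducer

theorem FST.exists_out_eq_prefix_append_ofRuns {A : Type} [Finite A] [Nontrivial A] (T : FST A)
    {m : ℕ} (hm : 0 < m) :
    ∃ (T' : FST A) (D : ℕ), ∀ (π u : List A) (rs : List (A × ℕ)), u <+: T.out π →
      ∃ π' : List A, T'.out π' = u ++ ofRuns rs ∧
        m * π'.length ≤ (m + 1) * π.length + 2 * (ofRuns rs).length + D * (rs.length + 1) := by
  classical
  obtain ⟨o, z, ho⟩ := exists_pair_ne A
  obtain ⟨C, hC⟩ := T.toTransducer.exists_length_emit_le
  let U := Transducer.runDecoder m z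
  let M := T.toTransducer.blockSwitch U none m z
  obtain ⟨T', hT'⟩ := M.exists_fst_out_eq_run (.inl (T.q0, 0))
  refine ⟨T', 2 * m * m + m * (1 + 2 * (C * m)), fun π u rs hu => ?_⟩
  rw [T.out_eq_run] at hu
  obtain ⟨x, v, ⟨j, hj⟩, hxπ, rfl, hv⟩ := Transducer.exists_dvd_run_append_of_prefix hC hm hu
  obtain ⟨π₁, hlen₁, hrun₁⟩ :=
    T.toTransducer.exists_blockSwitch_run_eq U none m z j T.q0 hj
  obtain ⟨π₂, hlen₂, hrun₂⟩ := Transducer.exists_runDecoder_run_eq m z v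
  obtain ⟨π₃, hlen₃, hrun₃⟩ := Transducer.exists_runDecoder_run_ofRuns hm ho rs
  have hrun₂₃ := Transducer.run_append_of_eq hrun₂ hrun₃
  refine ⟨π₁ ++ o :: (π₂ ++ π₃), ?_, ?_⟩
  · rw [hT', Transducer.run_append_of_eq hrun₁
      (Transducer.blockSwitch_run_cons_of_ne T.toTransducer U none m z _ ho _), hrun₂₃,
      List.append_assoc]
  · have hblocks : m * π₁.length ≤ (m + 1) * π.length := by
      calc m * π₁.length = (m + 1) * x.length := by rw [hlen₁, hj]; ring
        _ ≤ (m + 1) * π.length := Nat.mul_le_mul_left _ hxπ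
    have hliteral : m * (1 + π₂.length) ≤ m * (1 + 2 * (C * m)) := by
      rw [hlen₂]; gcongr
    calc
      m * (π₁ ++ o :: (π₂ ++ π₃)).length
          = m * π₁.length + m * (1 + π₂.length) + m * π₃.length := by
        simp only [List.length_append, List.length_cons]; ring
      _ ≤ (m + 1) * π.length + m * (1 + 2 * (C * m)) +
          (2 * (ofRuns rs).length + 2 * m * m * rs.length) := by gcongr
      _ ≤ _ := by nlinarith [Nat.zero_le (m * (1 + 2 * (C * m)) * rs.length), Nat.zero_le (m * m)]

section Prefixes

variable {A : Type}

theorem pre_congr {S W : ℕ → A} {n : ℕ} (h : ∀ i < n, S i = W i) : pre S n = pre W n :=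
  congrArg List.ofFn (funext fun i => h i i.2)

theorem pre_add (S : ℕ → A) (j k : ℕ) :
    pre S (j + k) = pre S j ++ pre (fun i => S (j + i)) k :=
  List.ofFn_add

theorem pre_eq_replicate {S : ℕ → A} {k : ℕ} {c : A} (h : ∀ i < k, S i = c) :
    pre S k = List.replicate k c :=
  (pre_congr h).trans (List.ofFn_const k c)

theorem pre_getD (z : A) (w : List A) (n : ℕ) :
    pre (fun i => w.getD i z) n = w.take n ++ List.replicate (n - w.length) z :=
  List.ext_getElem (by grind [pre]) (by grind [pre])

end Prefixes

section Expansions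

variable {b : ℕ}

theorem realSeq_eq_ofDigits (S : ℕ → Fin b) : realSeq b S = Real.ofDigits S := by
  simp [realSeq, Real.ofDigits, Real.ofDigitsTerm, div_eq_mul_inv]

theorem realb_pre (S : ℕ → Fin b) (n : ℕ) :
    realb b (pre S n) = ∑ i ∈ Finset.range n, Real.ofDigitsTerm S i := by
  rw [Finset.sum_range]
  refine Fintype.sum_equiv (finCongr List.length_ofFn) _ _ fun i => ?_
  simp [Real.ofDigitsTerm, pre, div_eq_mul_inv]

theorem realSeq_eq_realb_pre_add (S : ℕ → Fin b) (n : ℕ) :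
    realSeq b S = realb b (pre S n) + ((b : ℝ) ^ n)⁻¹ * realSeq b (fun i => S (i + n)) := by
  simp only [realSeq_eq_ofDigits, realb_pre, ← Real.ofDigits_eq_sum_add_ofDigits]

theorem realb_pre_succ (S : ℕ → Fin b) (n : ℕ) :
    realb b (pre S (n + 1)) = realb b (pre S n) + S n * ((b : ℝ) ^ (n + 1))⁻¹ := by
  simp only [realb_pre, Finset.sum_range_succ, Real.ofDigitsTerm]

theorem realSeq_nonneg (S : ℕ → Fin b) : 0 ≤ realSeq b S :=
  realSeq_eq_ofDigits S ▸ Real.ofDigits_nonneg S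

theorem realSeq_le_one (S : ℕ → Fin b) : realSeq b S ≤ 1 :=
  realSeq_eq_ofDigits S ▸ Real.ofDigits_le_one S

theorem realb_eq_realSeq_getD [NeZero b] (w : List (Fin b)) :
    realb b w = realSeq b (fun i => w.getD i 0) := by
  rw [realSeq_eq_realb_pre_add _ w.length, pre_getD]
  simp [realSeq]

theorem realSeq_compSeq (hb : 1 < b) (S : ℕ → Fin b) :
    realSeq b (compSeq b S) = 1 - realSeq b S := by
  rw [realSeq_eq_ofDigits, realSeq_eq_ofDigits, ← Real.ofDigits_const_last_eq_one' hb,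
    Real.ofDigits, Real.ofDigits, Real.ofDigits,
    ← Real.summable_ofDigitsTerm.tsum_sub Real.summable_ofDigitsTerm]
  refine tsum_congr fun i => ?_
  have hdigit : ((compSeq b S i : ℕ) : ℝ) = (b - 1 : ℕ) - (S i : ℕ) :=
    Nat.cast_sub (Nat.le_sub_one_of_lt (S i).isLt)
  simp only [Real.ofDigitsTerm, hdigit, sub_mul]

theorem inv_pow_le_realSeq {S : ℕ → Fin b} {t : ℕ} (ht : (S t : ℕ) ≠ 0) :
    ((b : ℝ) ^ (t + 1))⁻¹ ≤ realSeq b S := by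
  have hdigit : (1 : ℝ) ≤ (S t : ℕ) := by exact_mod_cast Nat.one_le_iff_ne_zero.2 ht
  calc
    ((b : ℝ) ^ (t + 1))⁻¹ ≤ Real.ofDigitsTerm S t :=
      le_mul_of_one_le_left (by positivity) hdigit
    _ ≤ Real.ofDigits S :=
      Real.summable_ofDigitsTerm.le_tsum t fun _ _ => Real.ofDigitsTerm_nonneg
    _ = realSeq b S := (realSeq_eq_ofDigits S).symm

theorem realSeq_lt_one (hb : 1 < b) {S : ℕ → Fin b} {t : ℕ} (ht : (S t : ℕ) ≠ b - 1) :
    realSeq b S < 1 := by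
  have hcomp : (compSeq b S t : ℕ) ≠ 0 := by
    have := (S t).isLt
    simp only [compSeq]
    omega
  have hpos : 0 < ((b : ℝ) ^ (t + 1))⁻¹ := by positivity
  linarith [inv_pow_le_realSeq hcomp, realSeq_compSeq hb S]

theorem abs_realb_pre_sub_realSeq_lt (hb : 1 < b) {S : ℕ → Fin b} (hS : ¬ endsBm1 b S) (n : ℕ) :
    |realb b (pre S n) - realSeq b S| < ((b : ℝ) ^ n)⁻¹ := by
  simp only [endsBm1, not_exists, not_forall] at hS
  obtain ⟨i, hi, hdigit⟩ := hS n
  have htail : realSeq b (fun i => S (i + n)) < 1 :=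
    realSeq_lt_one hb (t := i - n) (by rwa [Nat.sub_add_cancel hi])
  have hnonneg := realSeq_nonneg fun i => S (i + n)
  rw [realSeq_eq_realb_pre_add S n, sub_add_cancel_left, abs_neg, abs_of_nonneg (by positivity)]
  exact mul_lt_of_lt_one_right (by positivity) htail

theorem inv_pow_le_realSeq_sub_realSeq {S W : ℕ → Fin b} {i j : ℕ} (hpre : ∀ k < j, S k = W k)
    (hlt : W j < S j) (hij : j < i) (hi : (S i : ℕ) ≠ 0) :
    ((b : ℝ) ^ (i + 1))⁻¹ ≤ realSeq b S - realSeq b W := by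
  have hp : 0 ≤ ((b : ℝ) ^ (j + 1))⁻¹ := by positivity
  have hdigit : ((W j : ℕ) : ℝ) + 1 ≤ (S j : ℕ) := by exact_mod_cast hlt
  have htail : ((b : ℝ) ^ (i - (j + 1) + 1))⁻¹ ≤ realSeq b fun k => S (k + (j + 1)) :=
    inv_pow_le_realSeq (by rwa [Nat.sub_add_cancel hij])
  have hsplit : ((b : ℝ) ^ (i + 1))⁻¹ =
      ((b : ℝ) ^ (j + 1))⁻¹ * ((b : ℝ) ^ (i - (j + 1) + 1))⁻¹ := by
    rw [← mul_inv, ← pow_add]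
    congr 2
    omega
  rw [realSeq_eq_realb_pre_add S (j + 1), realSeq_eq_realb_pre_add W (j + 1), realb_pre_succ,
    realb_pre_succ, pre_congr hpre, hsplit]
  nlinarith [mul_le_mul_of_nonneg_left htail hp, mul_le_mul_of_nonneg_right hdigit hp,
    mul_le_mul_of_nonneg_left (realSeq_le_one fun k => W (k + (j + 1))) hp]

theorem digit_eq_zero_of_realSeq_sub_lt {S W : ℕ → Fin b} {i j n : ℕ}
    (hpre : ∀ k < j, S k = W k) (hlt : W j < S j)
    (hclose : realSeq b S - realSeq b W < ((b : ℝ) ^ n)⁻¹) (hij : j < i) (hin : i < n) :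
    (S i : ℕ) = 0 := by
  by_contra hi
  have hb : (1 : ℝ) ≤ b := by exact_mod_cast Fin.pos (S 0)
  have hpow : ((b : ℝ) ^ n)⁻¹ ≤ ((b : ℝ) ^ (i + 1))⁻¹ := by gcongr; omega
  linarith [inv_pow_le_realSeq_sub_realSeq hpre hlt hij hi]

/- The cases `W j < S j` and `S j < W j` are exchanged by complementing all digits. -/
theorem exists_forall_digit_eq_of_abs_realSeq_sub_lt (hb : 1 < b) {S W : ℕ → Fin b} {j n : ℕ}
    (hpre : ∀ k < j, S k = W k) (hne : S j ≠ W j)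
    (hclose : |realSeq b S - realSeq b W| < ((b : ℝ) ^ n)⁻¹) :
    ∃ c, ∀ i, j < i → i < n → S i = c := by
  obtain ⟨hlower, hupper⟩ := abs_lt.1 hclose
  rcases lt_or_gt_of_ne hne with hlt | hgt
  · refine ⟨⟨b - 1, by omega⟩, fun i hij hin => Fin.ext ?_⟩
    have hcomp : (compSeq b S i : ℕ) = 0 :=
      digit_eq_zero_of_realSeq_sub_lt (W := compSeq b W)
        (fun k hk => by simp only [compSeq, hpre k hk])
        (by have := (W j).isLt; simp only [compSeq, Fin.lt_def] at hlt ⊢; omega)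
        (by linarith [realSeq_compSeq hb S, realSeq_compSeq hb W]) hij hin
    have := (S i).isLt
    simp only [compSeq] at hcomp ⊢
    omega
  · exact ⟨⟨0, by omega⟩, fun i hij hin =>
      Fin.ext (digit_eq_zero_of_realSeq_sub_lt hpre hgt hupper hij hin)⟩

theorem exists_pre_eq_pre_append_ofRuns (hb : 1 < b) {S W : ℕ → Fin b} {n : ℕ}
    (hclose : |realSeq b S - realSeq b W| < ((b : ℝ) ^ n)⁻¹) :
    ∃ (k : ℕ) (rs : List (Fin b × ℕ)), rs.length ≤ 2 ∧ pre S n = pre W k ++ ofRuns rs := by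
  by_cases hagree : ∀ i < n, S i = W i
  · exact ⟨n, [], by simp, by simp [ofRuns, pre_congr hagree]⟩
  · have hex : ∃ j, j < n ∧ S j ≠ W j := by simpa using hagree
    obtain ⟨j, ⟨hj, hne⟩, hmin⟩ := Nat.findX hex
    have hpre : ∀ k < j, S k = W k := fun k hk => by
      by_contra h
      exact hmin k hk ⟨hk.trans hj, h⟩
    obtain ⟨c, hc⟩ := exists_forall_digit_eq_of_abs_realSeq_sub_lt hb hpre hne hclose
    refine ⟨j, [(S j, 1), (c, n - (j + 1))], le_rfl, ?_⟩
    calc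
      pre S n = pre S (j + 1 + (n - (j + 1))) := by rw [Nat.add_sub_of_le hj]
      _ = pre S j ++ [S j] ++ List.replicate (n - (j + 1)) c := by
        rw [pre_add, pre_add, pre_eq_replicate (S := fun i => S (j + 1 + i)) fun i hi =>
          hc _ (by omega) (by omega)]
        simp [pre]
      _ = _ := by rw [pre_congr hpre]; simp [ofRuns]

theorem exists_pre_eq_prefix_append_ofRuns (hb : 1 < b) {S : ℕ → Fin b} {w : List (Fin b)}
    {n : ℕ} (hclose : |realb b w - realSeq b S| < ((b : ℝ) ^ n)⁻¹) :
    ∃ (u : List (Fin b)) (rs : List (Fin b × ℕ)),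
      u <+: w ∧ rs.length ≤ 3 ∧ pre S n = u ++ ofRuns rs := by
  have : NeZero b := ⟨by omega⟩
  rw [abs_sub_comm, realb_eq_realSeq_getD] at hclose
  obtain ⟨k, rs, hrs, hpre⟩ := exists_pre_eq_pre_append_ofRuns hb hclose
  refine ⟨w.take k, (0, k - w.length) :: rs, List.take_prefix k w, Nat.succ_le_succ hrs, ?_⟩
  rw [hpre, pre_getD, List.append_assoc]
  rfl

theorem exists_realSeq_eq_not_endsBm1 (hb : 1 < b) {x : ℝ} (hx : x ∈ Set.Ico (0 : ℝ) 1) :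
    ∃ S : ℕ → Fin b, realSeq b S = x ∧ ¬ endsBm1 b S := by
  have : NeZero b := ⟨by omega⟩
  have hexp : realSeq b (Real.digits x b) = x := by
    rw [realSeq_eq_ofDigits, Real.ofDigits_digits hb hx]
  refine ⟨Real.digits x b, hexp, fun ⟨N, hN⟩ => ?_⟩
  have htail : (fun i => Real.digits x b (i + N)) = fun _ => ⟨b - 1, by omega⟩ :=
    funext fun i => Fin.ext (hN _ (Nat.le_add_left N i))
  have hsplit := realSeq_eq_realb_pre_add (Real.digits x b) N
  rw [hexp, htail, realSeq_eq_ofDigits, Real.ofDigits_const_last_eq_one' hb, realb_pre] at hsplit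
  have hb0 : (b : ℝ) ^ N ≠ 0 := pow_ne_zero N (by exact_mod_cast NeZero.ne b)
  have hfloor : (b : ℝ) ^ N * x = ⌊(b : ℝ) ^ N * x⌋₊ + 1 := by
    conv_lhs => rw [hsplit]
    rw [mul_add, Real.ofDigits_digits_sum_eq hx N, mul_one, mul_inv_cancel₀ hb0]
  exact (Nat.lt_floor_add_one _).ne hfloor

end Expansions

section Content

theorem Kfst_le_length {A : Type} {T : FST A} {π w : List A} (h : T.out π = w) :
    Kfst T w ≤ π.length :=
  sInf_le ⟨π, h, rfl⟩

theorem sInf_mem_of_ne_top {s : Set ℕ∞} (h : sInf s ≠ ⊤) : sInf s ∈ s :=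
  csInf_mem (Set.nonempty_iff_ne_empty.2 fun hempty => h (hempty ▸ sInf_empty))

theorem exists_length_eq_Kfst {A : Type} {T : FST A} {w : List A} (h : Kfst T w ≠ ⊤) :
    ∃ π, T.out π = w ∧ (π.length : ℕ∞) = Kfst T w :=
  sInf_mem_of_ne_top h

variable {b : ℕ} {T : FST (Fin b)} {x : ℝ}

theorem Kprec_le_Kfst {w : List (Fin b)} {δ : ℝ} (h : |realb b w - x| < δ) :
    Kprec b T δ x ≤ Kfst T w :=
  sInf_le ⟨w, h, rfl⟩

theorem Kprec_antitone : Antitone fun δ => Kprec b T δ x := fun _ _ hle =>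
  sInf_le_sInf fun _ ⟨w, hw, hK⟩ => ⟨w, hw.trans_le hle, hK⟩

theorem exists_length_eq_Kprec {δ : ℝ} (h : Kprec b T δ x ≠ ⊤) :
    ∃ π, |realb b (T.out π) - x| < δ ∧ (π.length : ℕ∞) = Kprec b T δ x := by
  obtain ⟨w, hw, hK⟩ := sInf_mem_of_ne_top h
  replace hK : Kfst T w = Kprec b T δ x := hK
  obtain ⟨π, rfl, hlen⟩ := exists_length_eq_Kfst (hK ▸ h)
  exact ⟨π, hw, hlen.trans hK⟩

theorem exists_mul_Kfst_pre_le (hb : 1 < b) (T : FST (Fin b)) {m : ℕ} (hm : 0 < m) :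
    ∃ (T' : FST (Fin b)) (D : ℕ), ∀ (S : ℕ → Fin b) (n : ℕ),
      m * Kfst T' (pre S n) ≤
        (m + 1) * Kprec b T ((b : ℝ) ^ n)⁻¹ (realSeq b S) + 2 * n + D := by
  have : Nontrivial (Fin b) := Fin.nontrivial_iff_two_le.2 hb
  obtain ⟨T', D, hT'⟩ := T.exists_out_eq_prefix_append_ofRuns hm
  refine ⟨T', D * 4, fun S n => ?_⟩
  by_cases htop : Kprec b T ((b : ℝ) ^ n)⁻¹ (realSeq b S) = ⊤
  · simp [htop]
  obtain ⟨π, hclose, hπ⟩ := exists_length_eq_Kprec htop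
  obtain ⟨u, rs, hu, hrs, hpre⟩ := exists_pre_eq_prefix_append_ofRuns hb hclose
  obtain ⟨π', hout, hlen⟩ := hT' π u rs hu
  have hruns : (ofRuns rs).length ≤ n := by
    simpa [pre] using (List.suffix_append u (ofRuns rs)).length_le.trans_eq
      (congrArg List.length hpre.symm)
  have hlen' : m * π'.length ≤ (m + 1) * π.length + 2 * n + D * 4 :=
    hlen.trans (by gcongr; omega)
  calc
    (m : ℕ∞) * Kfst T' (pre S n) ≤ m * π'.length := by
      gcongr
      exact Kfst_le_length (hout.trans hpre.symm)
    _ ≤ (m + 1) * π.length + 2 * n + (D * 4 : ℕ) := by exact_mod_cast hlen'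
    _ = _ := by rw [hπ]

end Content

section Rates

theorem tendsto_logb_one_div_nhdsGT_zero {b : ℝ} (hb : 1 < b) :
    Tendsto (fun δ => Real.logb b (1 / δ)) (nhdsWithin 0 (Set.Ioi 0)) atTop := by
  simp only [one_div]
  exact (Real.tendsto_logb_atTop hb).comp tendsto_inv_nhdsGT_zero

theorem tendsto_ofReal_div_nat_floor_atTop :
    Tendsto (fun x : ℝ => ENNReal.ofReal x / (⌊x⌋₊ : ℝ≥0∞)) atTop (nhds 1) := by
  have hinv : Tendsto (fun x : ℝ => x / (⌊x⌋₊ : ℝ)) atTop (nhds 1) := by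
    simpa using (tendsto_nat_floor_div_atTop (R := ℝ)).inv₀ one_ne_zero
  rw [← ENNReal.ofReal_one]
  refine (ENNReal.tendsto_ofReal hinv).congr' ?_
  filter_upwards [eventually_ge_atTop 1] with x hx
  rw [ENNReal.ofReal_div_of_pos (by exact_mod_cast Nat.floor_pos.2 hx), ENNReal.ofReal_natCast]

theorem le_inv_pow_floor_logb {b δ : ℝ} (hb : 1 < b) (hδ : 0 < δ) (hδ1 : δ ≤ 1) :
    δ ≤ (b ^ ⌊Real.logb b (1 / δ)⌋₊)⁻¹ := by
  have : 0 < b := one_pos.trans hb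
  have hlog : 0 ≤ Real.logb b (1 / δ) := Real.logb_nonneg hb ((one_le_div hδ).2 hδ1)
  rw [le_inv_comm₀ hδ (by positivity), ← one_div, ← Real.rpow_natCast,
    ← Real.le_logb_iff_rpow_le hb (by positivity)]
  exact Nat.floor_le hlog

theorem liminf_div_logb_eq_liminf_div_nat {b : ℝ} (hb : 1 < b) {f : ℝ → ℝ≥0∞}
    (hf : Antitone f) :
    liminf (fun δ => f δ / ENNReal.ofReal (Real.logb b (1 / δ))) (nhdsWithin 0 (Set.Ioi 0)) =
      liminf (fun n : ℕ => f (b ^ n)⁻¹ / n) atTop := by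
  set L : ℝ → ℝ := fun δ => Real.logb b (1 / δ)
  have hL : Tendsto L (nhdsWithin 0 (Set.Ioi 0)) atTop := tendsto_logb_one_div_nhdsGT_zero hb
  apply le_antisymm
  · have hpow : Tendsto (fun n : ℕ => (b ^ n)⁻¹) atTop (nhdsWithin 0 (Set.Ioi 0)) :=
      tendsto_inv_atTop_nhdsGT_zero.comp (tendsto_pow_atTop_atTop_of_one_lt hb)
    refine (liminf_le_liminf_of_le hpow).trans_eq ?_
    rw [← liminf_comp]
    congr! with n
    simp [Real.logb_pow, Real.logb_self_eq_one hb]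
  · have hratio : limsup (fun δ => ENNReal.ofReal (L δ) / (⌊L δ⌋₊ : ℝ≥0∞))
        (nhdsWithin 0 (Set.Ioi 0)) = 1 :=
      (tendsto_ofReal_div_nat_floor_atTop.comp hL).limsup_eq
    have hpointwise : ∀ᶠ δ in nhdsWithin 0 (Set.Ioi 0), f (b ^ ⌊L δ⌋₊)⁻¹ / (⌊L δ⌋₊ : ℝ≥0∞) ≤
        ENNReal.ofReal (L δ) / (⌊L δ⌋₊ : ℝ≥0∞) * (f δ / ENNReal.ofReal (L δ)) := by
      filter_upwards [hL.eventually_gt_atTop 0, Ioc_mem_nhdsGT one_pos] with δ hLδ hδ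
      have hLδ0 : ENNReal.ofReal (L δ) ≠ 0 := by simpa using hLδ
      calc
        _ ≤ f δ / (⌊L δ⌋₊ : ℝ≥0∞) := by
          gcongr
          exact hf (le_inv_pow_floor_logb hb hδ.1 hδ.2)
        _ = _ := by
          rw [← ENNReal.mul_div_right_comm, ENNReal.mul_div_cancel hLδ0 ENNReal.ofReal_ne_top]
    calc
      _ ≤ liminf (fun δ => f (b ^ ⌊L δ⌋₊)⁻¹ / (⌊L δ⌋₊ : ℝ≥0∞)) (nhdsWithin 0 (Set.Ioi 0)) :=
        liminf_comp (fun n : ℕ => f (b ^ n)⁻¹ / n) _ _ ▸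
          liminf_le_liminf_of_le (tendsto_nat_floor_atTop.comp hL)
      _ ≤ _ := liminf_le_liminf hpointwise
      _ ≤ 1 * _ := hratio ▸ ENNReal.liminf_mul_le (by simp [hratio]) (by simp [hratio])
      _ = _ := one_mul _

/-- The lower asymptotic cost of describing the real `x` by `T`, per base-`b` digit of precision;
the dimension `dimFSb b x` is its infimum over `T`. -/
noncomputable def pointRate (b : ℕ) (T : FST (Fin b)) (x : ℝ) : ℝ≥0∞ :=
  liminf (fun δ : ℝ => (Kprec b T δ x : ℝ≥0∞) / ENNReal.ofReal (Real.logb b (1 / δ)))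
    (nhdsWithin 0 (Set.Ioi 0))

/-- The lower asymptotic cost of describing the prefixes of `S` by `T`, per symbol; the dimension
`dimFSseq S` is its infimum over `T`. -/
noncomputable def seqRate {A : Type} (T : FST A) (S : ℕ → A) : ℝ≥0∞ :=
  liminf (fun n : ℕ => (Kfst T (pre S n) : ℝ≥0∞) / (n : ℝ≥0∞)) atTop

variable {b : ℕ}

theorem pointRate_eq_liminf_nat (hb : 1 < b) (T : FST (Fin b)) (x : ℝ) :
    pointRate b T x = liminf (fun n : ℕ => (Kprec b T ((b : ℝ) ^ n)⁻¹ x : ℝ≥0∞) / n) atTop :=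
  liminf_div_logb_eq_liminf_div_nat (by exact_mod_cast hb)
    (ENat.toENNReal_mono.comp_antitone Kprec_antitone)

theorem pointRate_le_seqRate (hb : 1 < b) (T : FST (Fin b)) {S : ℕ → Fin b}
    (hS : ¬ endsBm1 b S) : pointRate b T (realSeq b S) ≤ seqRate T S := by
  rw [pointRate_eq_liminf_nat hb]
  refine liminf_le_liminf (Eventually.of_forall fun n => ?_)
  gcongr
  exact Kprec_le_Kfst (abs_realb_pre_sub_realSeq_lt hb hS n)

theorem exists_mul_seqRate_le (hb : 1 < b) (T : FST (Fin b)) {m : ℕ} (hm : 0 < m) :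
    ∃ T' : FST (Fin b), ∀ S : ℕ → Fin b,
      m * seqRate T' S ≤ (m + 1) * pointRate b T (realSeq b S) + 3 := by
  obtain ⟨T', D, hT'⟩ := exists_mul_Kfst_pre_le hb T hm
  refine ⟨T', fun S => ?_⟩
  set K : ℕ → ℝ≥0∞ := fun n => Kprec b T ((b : ℝ) ^ n)⁻¹ (realSeq b S)
  have hpointwise : ∀ᶠ n : ℕ in atTop,
      m * ((Kfst T' (pre S n) : ℝ≥0∞) / n) ≤ (m + 1) * (K n / n) + 3 := by
    filter_upwards [eventually_gt_atTop 0, eventually_ge_atTop D] with n hn hDn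
    have hn0 : (n : ℝ≥0∞) ≠ 0 := by exact_mod_cast hn.ne'
    calc
      _ = m * (Kfst T' (pre S n) : ℝ≥0∞) / n := (mul_div_assoc _ _ _).symm
      _ ≤ ((m + 1) * K n + 2 * n + D) / n := by
        gcongr
        simpa using ENat.toENNReal_mono (hT' S n)
      _ ≤ ((m + 1) * K n + 2 * n + n) / n := by gcongr
      _ = ((m + 1) * K n + 3 * n) / n := by congr 1; ring
      _ = _ := by
        rw [ENNReal.add_div, ENNReal.mul_div_cancel_right hn0 (ENNReal.natCast_ne_top n),
          mul_div_assoc]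
  calc
    m * seqRate T' S = liminf (fun n : ℕ => m * ((Kfst T' (pre S n) : ℝ≥0∞) / n)) atTop :=
      (ENNReal.liminf_const_mul_of_ne_top (ENNReal.natCast_ne_top m)).symm
    _ ≤ liminf (fun n : ℕ => (m + 1) * (K n / n) + 3) atTop := liminf_le_liminf hpointwise
    _ = liminf (fun n : ℕ => (m + 1) * (K n / n)) atTop + 3 :=
      liminf_add_const _ _ _ (by isBoundedDefault) (by isBoundedDefault)
    _ = (m + 1) * pointRate b T (realSeq b S) + 3 := by
      rw [ENNReal.liminf_const_mul_of_ne_top (by finiteness), pointRate_eq_liminf_nat hb]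

end Rates

theorem le_of_forall_mul_le_succ_mul_add {a c e : ℝ≥0∞} (he : e ≠ ⊤)
    (h : ∀ m : ℕ, 0 < m → m * a ≤ (m + 1) * c + e) : a ≤ c := by
  rcases eq_or_ne c ⊤ with rfl | hc
  · exact le_top
  have hlim : Tendsto (fun m : ℕ => c + (c + e) / m) atTop (nhds c) := by
    simpa using (ENNReal.Tendsto.const_div ENNReal.tendsto_nat_nhds_top
      (Or.inr (ENNReal.add_ne_top.2 ⟨hc, he⟩))).const_add c
  refine ge_of_tendsto hlim ?_
  filter_upwards [eventually_gt_atTop 0] with m hm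
  have hm0 : (m : ℝ≥0∞) ≠ 0 := by exact_mod_cast hm.ne'
  calc
    a = m * a / m := by
      rw [mul_comm, ENNReal.mul_div_cancel_right hm0 (ENNReal.natCast_ne_top m)]
    _ ≤ (c * m + (c + e)) / m := by
      gcongr
      exact (h m hm).trans_eq (by ring)
    _ = c + (c + e) / m := by
      rw [ENNReal.add_div, ENNReal.mul_div_cancel_right hm0 (ENNReal.natCast_ne_top m)]

theorem dimFSbSet_image_realSeq {b : ℕ} (hb : 1 < b) {X : Set (ℕ → Fin b)}
    (hX : ∀ S ∈ X, ¬ endsBm1 b S) : dimFSbSet b (realSeq b '' X) = dimFSseqSet X := by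
  have hleft : dimFSbSet b (realSeq b '' X) = ⨅ T, ⨆ S ∈ X, pointRate b T (realSeq b S) :=
    iInf_congr fun T => iSup_image
  rw [hleft]
  apply le_antisymm
  · exact iInf_mono fun T => iSup₂_mono fun S hS => pointRate_le_seqRate hb T (hX S hS)
  · refine le_iInf fun T => le_of_forall_mul_le_succ_mul_add (e := 3) (by finiteness) fun m hm => ?_
    obtain ⟨T', hT'⟩ := exists_mul_seqRate_le hb T hm
    calc
      m * dimFSseqSet X ≤ m * ⨆ S ∈ X, seqRate T' S := by gcongr; exact iInf_le _ T'
      _ = ⨆ S ∈ X, m * seqRate T' S := by simp only [ENNReal.mul_iSup]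
      _ ≤ (m + 1) * (⨆ S ∈ X, pointRate b T (realSeq b S)) + 3 :=
        iSup₂_le fun S hS => (hT' S).trans (by gcongr; exact le_iSup₂_of_le S hS le_rfl)

/-- dim_FS^b(x) = dim_FS(seq_b(x)) and dim_FS^b(A) = dim_FS(seq_b(A)). -/
theorem dimFSb_eq_dimFSseq (b : ℕ) (hb : 2 ≤ b) :
    (∀ x ∈ Set.Ico (0:ℝ) 1, ∀ S : ℕ → Fin b,
      realSeq b S = x → ¬ endsBm1 b S → dimFSb b x = dimFSseq S) ∧
    (∀ A : Set ℝ, A ⊆ Set.Ico (0:ℝ) 1 →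
      dimFSbSet b A = dimFSseqSet {S : ℕ → Fin b | realSeq b S ∈ A ∧ ¬ endsBm1 b S}) := by
  constructor
  · rintro x - S rfl hS
    calc
      dimFSb b (realSeq b S) = dimFSbSet b (realSeq b '' {S}) := by
        simp only [dimFSb, dimFSbSet, image_singleton, iSup_singleton]
      _ = dimFSseqSet {S} := dimFSbSet_image_realSeq hb (by simpa using hS)
      _ = dimFSseq S := by simp only [dimFSseq, dimFSseqSet, iSup_singleton]
  · intro A hA
    have himage : realSeq b '' {S | realSeq b S ∈ A ∧ ¬ endsBm1 b S} = A := by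
      refine Subset.antisymm (image_subset_iff.2 fun S hS => hS.1) fun x hx => ?_
      obtain ⟨S, rfl, hS⟩ := exists_realSeq_eq_not_endsBm1 hb (hA hx)
      exact mem_image_of_mem _ ⟨hx, hS⟩
    rw [← dimFSbSet_image_realSeq hb fun S hS => hS.2, himage]
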